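/- Let λ > 0, r > 0, Ψ > 0, and Φ, Θ ∈ ℝ, and set k₀ = 2π/λ and f_n(x, z) = ((x − Φ)² + Ψ² + (z − Θ)²)^{−n/2}. Then as a and b both tend to infinity, (Ψ/(4π)) · ∬_{[−a,a]×[−b,b]} ( f₃(x, z) − (1/(k₀² r²)) f₅(x, z) + (1/(k₀⁴ r⁴)) f₇(x, z) ) dx dz converges to 1/2 − λ²/(24 π² r² Ψ²) + λ⁴/(160 π⁴ r⁴ Ψ⁴). -/

import Mathlib

open Real MeasureTheory Filter Topology

lemma aux_integrable (Ψ s : ℝ) (hΨ : 0 < Ψ) (hs : 1 < s) :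
    Integrable (fun p : ℝ × ℝ => (p.1 ^ 2 + Ψ ^ 2 + p.2 ^ 2) ^ (-s)) := by
  have h := integrable_rpow_neg_one_add_norm_sq (E := ℝ × ℝ) (μ := volume) (r := 2 * s)
    (by simp; linarith)
  set c := min 1 (Ψ ^ 2) with hc
  have hc0 : 0 < c := lt_min one_pos (by positivity)
  have hpos : ∀ p : ℝ × ℝ, 0 < p.1 ^ 2 + Ψ ^ 2 + p.2 ^ 2 := fun p => by positivity
  refine (h.const_mul (c ^ (-s))).mono' ?_ ?_
  · refine Continuous.aestronglyMeasurable ?_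
    refine Continuous.rpow_const (by fun_prop) (fun p => Or.inl (hpos p).ne')
  · refine Eventually.of_forall fun p => ?_
    rw [Real.norm_of_nonneg (rpow_nonneg (hpos p).le _)]
    have e : -(2 * s) / 2 = -s := by ring
    rw [e, ← Real.mul_rpow hc0.le (by positivity)]
    refine Real.rpow_le_rpow_of_nonpos (by positivity) ?_ (by linarith)
    have h1 : c ≤ 1 := min_le_left _ _
    have h2 : c ≤ Ψ ^ 2 := min_le_right _ _
    have h3 : ‖p‖ ^ 2 ≤ p.1 ^ 2 + p.2 ^ 2 := by
      rw [Prod.norm_def]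
      rcases max_choice ‖p.1‖ ‖p.2‖ with h | h <;> rw [h, Real.norm_eq_abs, sq_abs] <;>
        nlinarith [sq_nonneg p.1, sq_nonneg p.2]
    nlinarith [sq_nonneg ‖p‖]

lemma aux_radial (Ψ s : ℝ) (hΨ : 0 < Ψ) (hs : 1 < s) :
    ∫ t in Set.Ioi (0 : ℝ), t * (t ^ 2 + Ψ ^ 2) ^ (-s) =
      (Ψ ^ 2) ^ (1 - s) / (2 * (s - 1)) := by
  have hs' : s - 1 ≠ 0 := by linarith
  have hs'' : 1 - s ≠ 0 := by linarith
  have hd : ∀ t : ℝ, HasDerivAt (fun t : ℝ => (t ^ 2 + Ψ ^ 2) ^ (1 - s) / (2 * (1 - s)))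
      (t * (t ^ 2 + Ψ ^ 2) ^ (-s)) t := by
    intro t
    have h1 : HasDerivAt (fun t : ℝ => t ^ 2 + Ψ ^ 2) (2 * t) t := by
      simpa using (hasDerivAt_pow 2 t).add_const (Ψ ^ 2)
    have h2 := (h1.rpow_const (p := 1 - s) (Or.inl (by positivity))).div_const (2 * (1 - s))
    have e : 1 - s - 1 = -s := by ring
    rw [e] at h2
    refine h2.congr_deriv ?_
    field_simp
  have ht : Tendsto (fun t : ℝ => (t ^ 2 + Ψ ^ 2) ^ (1 - s) / (2 * (1 - s))) atTop (𝓝 0) := by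
    have h1 : Tendsto (fun t : ℝ => t ^ 2 + Ψ ^ 2) atTop atTop :=
      tendsto_atTop_add_const_right _ _ (tendsto_pow_atTop two_ne_zero)
    have h2 := (tendsto_rpow_neg_atTop (y := s - 1) (by linarith)).comp h1
    have h3 := h2.div_const (2 * (1 - s))
    simpa [Function.comp_def] using h3
  rw [integral_Ioi_of_hasDerivAt_of_nonneg (hd 0).continuousAt.continuousWithinAt
    (fun t _ => hd t) (fun t ht => ?_) ht]
  · have e : 2 * (1 - s) = -(2 * (s - 1)) := by ring
    rw [e, div_neg]
    simp
  · have : 0 < t := ht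
    positivity

lemma aux_value (Ψ s : ℝ) (hΨ : 0 < Ψ) (hs : 1 < s) :
    ∫ p : ℝ × ℝ, (p.1 ^ 2 + Ψ ^ 2 + p.2 ^ 2) ^ (-s) =
      (Ψ ^ 2) ^ (1 - s) / (2 * (s - 1)) * (2 * π) := by
  rw [← integral_comp_polarCoord_symm]
  have e : ∀ p : ℝ × ℝ, p.1 • (((polarCoord.symm p).1 ^ 2 + Ψ ^ 2 +
      (polarCoord.symm p).2 ^ 2) ^ (-s)) = (p.1 * (p.1 ^ 2 + Ψ ^ 2) ^ (-s)) * 1 := by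
    intro p
    rw [polarCoord_symm_apply, smul_eq_mul, mul_one]
    congr 2
    have := Real.sin_sq_add_cos_sq p.2
    simp only
    linear_combination p.1 ^ 2 * this
  simp only [e]
  rw [polarCoord_target, Measure.volume_eq_prod,
    setIntegral_prod_mul (fun t : ℝ => t * (t ^ 2 + Ψ ^ 2) ^ (-s)) (fun _ => (1 : ℝ)),
    aux_radial Ψ s hΨ hs]
  congr 1
  simp
  rw [max_eq_left (by positivity)]
  ring

lemma aux_cover : AECover (volume : Measure (ℝ × ℝ)) (atTop ×ˢ atTop)
    (fun p : ℝ × ℝ => Set.Ioc (-p.1) p.1 ×ˢ Set.Ioc (-p.2) p.2) where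
  ae_eventually_mem := by
    refine Eventually.of_forall fun x => ?_
    have h1 : ∀ y : ℝ, ∀ᶠ a : ℝ in atTop, y ∈ Set.Ioc (-a) a := fun y => by
      filter_upwards [eventually_gt_atTop |y|] with a ha
      exact ⟨(abs_lt.1 ha).1, (abs_lt.1 ha).2.le⟩
    filter_upwards [(h1 x.1).prod_mk (h1 x.2)] with p hp
    exact ⟨hp.1, hp.2⟩
  measurableSet := fun p => measurableSet_Ioc.prod measurableSet_Ioc

lemma aux_tendsto (F : ℝ × ℝ → ℝ) (hF : Integrable F) :
    Tendsto (fun p : ℝ × ℝ => ∫ x in (-p.1)..p.1, ∫ z in (-p.2)..p.2, F (x, z))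
      (atTop ×ˢ atTop) (𝓝 (∫ q, F q)) := by
  refine (aux_cover.integral_tendsto_of_countably_generated hF).congr' ?_
  filter_upwards [(eventually_ge_atTop (0 : ℝ)).prod_mk (eventually_ge_atTop (0 : ℝ))] with p hp
  rw [intervalIntegral.integral_of_le (by linarith [hp.1])]
  simp only [intervalIntegral.integral_of_le (show -p.2 ≤ p.2 by linarith [hp.2])]
  rw [Measure.volume_eq_prod, setIntegral_prod]
  rw [← Measure.volume_eq_prod]
  exact hF.integrableOn


/-- Core of Theorem 2 of the paper: with `k₀ = 2π/λ` and
`fₙ(x,z) = ((x - Φ)² + Ψ² + (z - Θ)²)^{-n/2}`, as `a, b → ∞`,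
`(Ψ/(4π)) ∬_{[-a,a]×[-b,b]} (f₃ - f₅/(k₀²r²) + f₇/(k₀⁴r⁴)) dx dz`
converges to `1/2 - λ²/(24π²r²Ψ²) + λ⁴/(160π⁴r⁴Ψ⁴)`. -/
theorem stmt_5 (lam r Ψ Φ Θ k₀ : ℝ) (hlam : 0 < lam) (hr : 0 < r) (hΨ : 0 < Ψ)
    (hk : k₀ = 2 * π / lam) :
    Filter.Tendsto
      (fun p : ℝ × ℝ =>
        Ψ / (4 * π) *
          ∫ x in (-p.1)..p.1, ∫ z in (-p.2)..p.2,
            (((x - Φ) ^ 2 + Ψ ^ 2 + (z - Θ) ^ 2) ^ (-(3 / 2 : ℝ)) -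
              (1 / (k₀ ^ 2 * r ^ 2)) *
                ((x - Φ) ^ 2 + Ψ ^ 2 + (z - Θ) ^ 2) ^ (-(5 / 2 : ℝ)) +
              (1 / (k₀ ^ 4 * r ^ 4)) *
                ((x - Φ) ^ 2 + Ψ ^ 2 + (z - Θ) ^ 2) ^ (-(7 / 2 : ℝ))))
      (Filter.atTop ×ˢ Filter.atTop)
      (𝓝 (1 / 2 - lam ^ 2 / (24 * π ^ 2 * r ^ 2 * Ψ ^ 2) +
        lam ^ 4 / (160 * π ^ 4 * r ^ 4 * Ψ ^ 4))) := by
  have hI : ∀ s : ℝ, 1 < s → Integrable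
      (fun q : ℝ × ℝ => ((q.1 - Φ) ^ 2 + Ψ ^ 2 + (q.2 - Θ) ^ 2) ^ (-s)) := fun s hs =>
    (aux_integrable Ψ s hΨ hs).comp_sub_right (Φ, Θ)
  have hV : ∀ s : ℝ, 1 < s →
      ∫ q : ℝ × ℝ, ((q.1 - Φ) ^ 2 + Ψ ^ 2 + (q.2 - Θ) ^ 2) ^ (-s) =
        (Ψ ^ 2) ^ (1 - s) / (2 * (s - 1)) * (2 * π) := fun s hs => by
    rw [← aux_value Ψ s hΨ hs]
    exact integral_sub_right_eq_self
      (fun p : ℝ × ℝ => (p.1 ^ 2 + Ψ ^ 2 + p.2 ^ 2) ^ (-s)) (Φ, Θ)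
  have i3 := hI (3 / 2) (by norm_num)
  have i5 := (hI (5 / 2) (by norm_num)).const_mul (1 / (k₀ ^ 2 * r ^ 2))
  have i7 := (hI (7 / 2) (by norm_num)).const_mul (1 / (k₀ ^ 4 * r ^ 4))
  have hT := (aux_tendsto _ ((i3.sub i5).add i7)).const_mul (Ψ / (4 * π))
  have i35 := i3.sub i5
  simp only [Pi.add_apply, Pi.sub_apply] at hT
  rw [integral_add (by exact i35) i7, integral_sub i3 i5, integral_const_mul,
    integral_const_mul, hV _ (by norm_num), hV _ (by norm_num), hV _ (by norm_num)] at hT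
  convert hT using 2
  have e : ∀ n : ℕ, ∀ t : ℝ, 2 * t = -(n : ℝ) → (Ψ ^ 2) ^ t = (Ψ ^ n)⁻¹ := by
    intro n t h
    rw [← Real.rpow_natCast Ψ 2, ← Real.rpow_mul hΨ.le]
    push_cast
    rw [h, Real.rpow_neg hΨ.le, Real.rpow_natCast]
  rw [e 1 _ (by norm_num), e 3 _ (by norm_num), e 5 _ (by norm_num), hk]
  have := Real.pi_pos
  field_simp
  ring
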